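/- arXiv:1905.12649 — 5 statements merged into one kernel-verified Lean document; each statement's English description precedes it below -/
import Mathlib

section
/- Let s, s′ : ℤ² × ℤ² → ℂ satisfy |s(x,y)| = |s′(x,y)| = 1, s(y,x) = conj(s(x,y)), and s′(y,x) = conj(s′(x,y)) for all x, y ∈ ℤ². Suppose that for all x, y, z ∈ ℤ², s(x,y)·s(y,z)·s(z,x) = s′(x,y)·s′(y,z)·s′(z,x). Then there exists u : ℤ² → ℂ with |u(x)| = 1 for all x and s′(x,y) = u(x)·s(x,y)·conj(u(y)) for all x, y ∈ ℤ². -/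
/-- **Gauge invariance of Peierls phases** (Sec. VI of the paper).
If two unimodular, Hermitian-symmetric phase assignments `s` and `s'` on `ℤ² × ℤ²` have
equal products around every triangle, then they differ by a diagonal gauge transformation:
`s'(x,y) = u(x) s(x,y) conj(u(y))` for some unimodular `u`. -/
theorem peierls_gauge_invariance
    (s s' : ℤ × ℤ → ℤ × ℤ → ℂ)
    (hs_abs : ∀ x y, ‖s x y‖ = 1) (hs'_abs : ∀ x y, ‖s' x y‖ = 1)
    (hs_symm : ∀ x y, s y x = starRingEnd ℂ (s x y))
    (hs'_symm : ∀ x y, s' y x = starRingEnd ℂ (s' x y))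
    (hloop : ∀ x y z, s x y * s y z * s z x = s' x y * s' y z * s' z x) :
    ∃ u : ℤ × ℤ → ℂ, (∀ x, ‖u x‖ = 1) ∧
      ∀ x y, s' x y = u x * s x y * starRingEnd ℂ (u y) := by
  have hinv : ∀ x y, s' x y * s' y x = 1 := fun x y => by
    rw [hs'_symm x y, Complex.mul_conj']
    simp [hs'_abs]
  -- The ratio `s' / s` is a cocycle; `u x` is its value on the edge from `x` to the origin.
  refine ⟨fun x => s' x 0 * s 0 x, fun x => by simp [hs_abs, hs'_abs], fun x y => ?_⟩
  rw [map_mul, ← hs'_symm, ← hs_symm]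
  linear_combination (-(s' x 0 * s' 0 y)) * hloop 0 x y
    - s' x y * s' 0 y * s' y 0 * hinv x 0 - s' x y * hinv 0 y
end

section
/- Let Q be an N × N Hermitian complex matrix and suppose there exists a unitary N × N matrix K such that K† · conj(Q) · K = 1 − Q, where conj(Q) denotes the entrywise complex conjugate of Q and 1 is the identity matrix. Then for every real number t, the dimension of the eigenspace ker(Q − t·1) equals the dimension of the eigenspace ker(Q − (1−t)·1). -/
open Matrix

/-!
Since `Q` is Hermitian, `conj Q = Qᵀ`, so the symmetry relation gives
`Kᴴ * (Q - t)ᵀ * K = -(Q - (1 - t))`. Transposition, multiplication by invertible matrices and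
negation preserve the rank, so `Q - t` and `Q - (1 - t)` have equal rank, and by rank-nullity
equal nullity.
-/

/-- **Particle-hole symmetry makes the spectrum symmetric about `1/2`**
(Sec. III, comment 2 of the paper).  If `K† conj(Q) K = 1 - Q` for a unitary `K`, then
the eigenspaces of `Q` for `t` and `1 - t` have equal dimensions. -/
theorem phs_spectrum_symmetric (N : ℕ) (Q K : Matrix (Fin N) (Fin N) ℂ)
    (hQ : Q.IsHermitian) (hK : K ∈ Matrix.unitaryGroup (Fin N) ℂ)
    (hphs : Kᴴ * Q.map (starRingEnd ℂ) * K = 1 - Q) :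
    ∀ t : ℝ,
      Module.finrank ℂ (LinearMap.ker (Matrix.toLin' (Q - (t : ℂ) • 1))) =
      Module.finrank ℂ (LinearMap.ker (Matrix.toLin' (Q - ((1 : ℂ) - (t : ℂ)) • 1))) := by
  intro t
  have hK1 : Kᴴ * K = 1 := Matrix.mem_unitaryGroup_iff'.mp hK
  have hdet : IsUnit K.det := (Matrix.isUnit_iff_isUnit_det K).mp (IsUnit.of_mul_eq_one_right _ hK1)
  have hdet' : IsUnit Kᴴ.det :=
    (Matrix.isUnit_iff_isUnit_det Kᴴ).mp (IsUnit.of_mul_eq_one _ hK1)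
  have hconj : Q.map (starRingEnd ℂ) = Qᵀ := by
    ext i j
    exact hQ.apply j i
  have key : Kᴴ * (Q - (t : ℂ) • 1)ᵀ * K = -(Q - ((1 : ℂ) - (t : ℂ)) • 1) := by
    rw [hconj] at hphs
    rw [Matrix.transpose_sub, Matrix.transpose_smul, Matrix.transpose_one, Matrix.mul_sub,
      Matrix.sub_mul, hphs, Matrix.mul_smul, Matrix.mul_one, Matrix.smul_mul, hK1, sub_smul,
      one_smul]
    abel
  have hrank : (Q - (t : ℂ) • 1).rank = (Q - ((1 : ℂ) - (t : ℂ)) • 1).rank := by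
    have hneg (A : Matrix (Fin N) (Fin N) ℂ) : (-A).rank = A.rank := by
      rw [Matrix.rank, Matrix.rank, ← Matrix.toLin'_apply', ← Matrix.toLin'_apply', map_neg,
        LinearMap.range_neg]
    rw [← hneg (Q - ((1 : ℂ) - (t : ℂ)) • 1), ← key,
      Matrix.rank_mul_eq_left_of_isUnit_det _ _ hdet,
      Matrix.rank_mul_eq_right_of_isUnit_det _ _ hdet', Matrix.rank_transpose]
  have h1 := (Matrix.toLin' (Q - (t : ℂ) • 1)).finrank_range_add_finrank_ker
  have h2 := (Matrix.toLin' (Q - ((1 : ℂ) - (t : ℂ)) • 1)).finrank_range_add_finrank_ker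
  rw [Matrix.rank, Matrix.rank, ← Matrix.toLin'_apply', ← Matrix.toLin'_apply'] at hrank
  omega
end

section
/- Let H be an N × N Hermitian complex matrix and let T be a unitary N × N matrix satisfying T · conj(T) = −1 and T · conj(H) · T† = H, where conj denotes entrywise complex conjugation. Then for every real number μ, the dimension of the eigenspace ker(H − μ·1) is even. -/
open Matrix

/-!
The map `Θ v = T · conj v` is antilinear, squares to `-1` and preserves each eigenspace of `H` with
real eigenvalue, because `H T = T conj(H)`. A finite-dimensional complex space carrying an antilinear
`θ` with `θ² = -1` has even dimension `n` (`even_finrank_of_antilinear`): if `M` is the matrix of `θ`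
in a basis, then `M · conj M = -1`, and taking determinants gives `|det M|² = (-1)ⁿ`, so `(-1)ⁿ ≥ 0`.
-/

theorem even_of_mul_map_conj_eq_neg_one {n : ℕ} (M : Matrix (Fin n) (Fin n) ℂ)
    (hM : M * M.map (starRingEnd ℂ) = -1) : Even n := by
  have h1 : M.det * (starRingEnd ℂ) M.det = (-1) ^ n := by
    have h := congrArg Matrix.det hM
    rw [Matrix.det_mul, Matrix.det_neg, Matrix.det_one, mul_one, Fintype.card_fin] at h
    rw [← h, RingHom.map_det]
    rfl
  rw [Complex.mul_conj] at h1
  by_contra hn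
  rw [(Nat.not_even_iff_odd.mp hn).neg_one_pow] at h1
  have h2 : Complex.normSq M.det = -1 := by exact_mod_cast h1
  linarith [Complex.normSq_nonneg M.det]

theorem even_finrank_of_antilinear {V : Type*} [AddCommGroup V] [Module ℂ V]
    [FiniteDimensional ℂ V] (θ : V →ₛₗ[starRingEnd ℂ] V) (hθ : ∀ v, θ (θ v) = -v) :
    Even (Module.finrank ℂ V) := by
  let b := Module.finBasis ℂ V
  refine even_of_mul_map_conj_eq_neg_one (Matrix.of fun i j => b.repr (θ (b j)) i) ?_
  ext i j
  have h : b.repr (θ (θ (b j))) i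
      = ∑ k, (starRingEnd ℂ) (b.repr (θ (b j)) k) * b.repr (θ (b k)) i := by
    conv_lhs => rw [← b.sum_repr (θ (b j))]
    simp [-Module.Basis.sum_repr, map_sum, LinearMap.map_smulₛₗ]
  rw [hθ] at h
  simp only [Matrix.mul_apply, Matrix.map_apply, Matrix.of_apply, Matrix.neg_apply]
  rw [Finset.sum_congr rfl fun k _ => mul_comm _ _, ← h]
  simp [Matrix.one_apply, Finsupp.single_apply, eq_comm]

/-- **Kramers degeneracy.** If `H` is Hermitian and `T` is unitary with
`T conj(T) = -1` and `T conj(H) T† = H` (time-reversal symmetry with `Θ² = -1`), then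
every eigenspace of `H` has even dimension. -/
theorem kramers_degeneracy (N : ℕ) (H T : Matrix (Fin N) (Fin N) ℂ)
    (hH : H.IsHermitian) (hT : T ∈ Matrix.unitaryGroup (Fin N) ℂ)
    (hTT : T * T.map (starRingEnd ℂ) = -1)
    (hTRS : T * H.map (starRingEnd ℂ) * Tᴴ = H) :
    ∀ μ : ℝ,
      Even (Module.finrank ℂ (LinearMap.ker (Matrix.toLin' (H - (μ : ℂ) • 1)))) := by
  intro μ
  have hHT : H * T = T * H.map (starRingEnd ℂ) := by
    have h1 : Tᴴ * T = 1 := (Matrix.mem_unitaryGroup_iff').mp hT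
    conv_lhs => rw [← hTRS]
    rw [Matrix.mul_assoc, h1, Matrix.mul_one]
  have hconj : ∀ (A : Matrix (Fin N) (Fin N) ℂ) (v : Fin N → ℂ),
      star (A *ᵥ v) = A.map (starRingEnd ℂ) *ᵥ star v := by
    intro A v
    ext i
    exact RingHom.map_mulVec (starRingEnd ℂ) A v i
  have hmem : ∀ v : Fin N → ℂ,
      v ∈ LinearMap.ker (Matrix.toLin' (H - (μ : ℂ) • 1)) ↔ H *ᵥ v = (μ : ℂ) • v := by
    intro v
    rw [LinearMap.mem_ker, Matrix.toLin'_apply, Matrix.sub_mulVec, Matrix.smul_mulVec,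
      Matrix.one_mulVec, sub_eq_zero]
  have hstable : ∀ v ∈ LinearMap.ker (Matrix.toLin' (H - (μ : ℂ) • 1)),
      T *ᵥ star v ∈ LinearMap.ker (Matrix.toLin' (H - (μ : ℂ) • 1)) := by
    intro v hv
    rw [hmem] at hv ⊢
    -- The eigenvalue is unchanged by the conjugation because `μ` is real.
    rw [Matrix.mulVec_mulVec, hHT, ← Matrix.mulVec_mulVec, ← hconj, hv, star_smul,
      Matrix.mulVec_smul]
    simp
  let θ : LinearMap.ker (Matrix.toLin' (H - (μ : ℂ) • 1)) →ₛₗ[starRingEnd ℂ]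
      LinearMap.ker (Matrix.toLin' (H - (μ : ℂ) • 1)) :=
    { toFun := fun v => ⟨T *ᵥ star v.1, hstable v.1 v.2⟩
      map_add' := fun v w => Subtype.ext (by simp [Matrix.mulVec_add])
      map_smul' := fun c v => Subtype.ext (by simp [Matrix.mulVec_smul]) }
  refine even_finrank_of_antilinear θ fun v => Subtype.ext ?_
  change T *ᵥ star (T *ᵥ star v.1) = -v.1
  rw [hconj, star_star, Matrix.mulVec_mulVec, hTT, Matrix.neg_mulVec, Matrix.one_mulVec]
end

section
/- Let Q be an N × N Hermitian complex matrix with eigenvalues q₁, …, q_N (listed with multiplicity), and suppose there exists a unitary N × N matrix K such that K† · conj(Q) · K = 1 − Q, where conj(Q) is the entrywise complex conjugate of Q. Then ∑_{i=1}^N (q_i − f(q_i)) = m/2, where f(q) = 0 if q ≤ 1/2, f(q) = 1 if q > 1/2, and m is the multiplicity of the eigenvalue 1/2 of Q. -/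
/-!
Since `Q` is Hermitian, its entrywise conjugate is `Qᵀ`, so the symmetry says that `1 - Q` is
similar to `Qᵀ` and has the characteristic polynomial of `Q`. Hence the multisets `{qᵢ}` and
`{1 - qᵢ}` coincide (`eigenvalues_reflect`), and with `g q = q - f q` the sums `∑ g(qᵢ)` and
`∑ g(1 - qᵢ)` agree. As `g q + g (1 - q)` is `1` for `q = 1/2` and `0` otherwise, twice the sum
counts the indices with `qᵢ = 1/2`, which is the dimension of the eigenspace
(`finrank_ker_sub_smul`).
-/

open Matrix

/-- The eigenvalues of `Q` are symmetric about `1/2`, with multiplicity. -/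
lemma eigenvalues_reflect {N : ℕ} {Q K : Matrix (Fin N) (Fin N) ℂ}
    (hQ : Q.IsHermitian) (hK : K ∈ Matrix.unitaryGroup (Fin N) ℂ)
    (hphs : Kᴴ * Q.map (starRingEnd ℂ) * K = 1 - Q) :
    Finset.univ.val.map (fun i => 1 - hQ.eigenvalues i) =
      Finset.univ.val.map hQ.eigenvalues := by
  have hconj : Q.map (starRingEnd ℂ) = Qᵀ := by
    conv_rhs => rw [← hQ.eq]
    rfl
  have hKK : K * Kᴴ = 1 := Matrix.mem_unitaryGroup_iff.mp hK
  have hchar : (1 - Q).charpoly = Q.charpoly := by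
    rw [← hphs, hconj, Matrix.charpoly_mul_comm, ← mul_assoc, hKK, one_mul,
      Matrix.charpoly_transpose]
  have hdiag : 1 - Q = Unitary.conjStarAlgAut ℂ _ hQ.eigenvectorUnitary
      (diagonal fun i => 1 - (hQ.eigenvalues i : ℂ)) := by
    have : (diagonal fun i => 1 - (hQ.eigenvalues i : ℂ)) =
        1 - diagonal (RCLike.ofReal ∘ hQ.eigenvalues) := by
      rw [← diagonal_one, diagonal_sub]
      rfl
    rw [this, map_sub, map_one, ← hQ.spectral_theorem]
  have hchar' : (1 - Q).charpoly =
      ∏ i, (Polynomial.X - Polynomial.C (1 - (hQ.eigenvalues i : ℂ))) := by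
    rw [hdiag, Unitary.conjStarAlgAut_apply, charpoly_mul_comm, ← mul_assoc]
    simp [charpoly_diagonal]
  have hroots : (1 - Q).charpoly.roots =
      Finset.univ.val.map (fun i => 1 - (hQ.eigenvalues i : ℂ)) := by
    rw [hchar', Polynomial.roots_prod]
    · simp only [Polynomial.roots_X_sub_C, Multiset.bind_singleton]
    · simp [Finset.prod_ne_zero_iff, Polynomial.X_sub_C_ne_zero, -map_sub]
  apply Multiset.map_injective Complex.ofReal_injective
  rw [hchar, hQ.roots_charpoly_eq_eigenvalues] at hroots
  simpa [Function.comp_def] using hroots.symm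

/-- For a Hermitian matrix the geometric multiplicity of a real number `c` is the number of
indices at which the eigenvalue list takes the value `c`. -/
lemma finrank_ker_sub_smul {N : ℕ} {Q : Matrix (Fin N) (Fin N) ℂ} (hQ : Q.IsHermitian) (c : ℝ) :
    Module.finrank ℂ (LinearMap.ker (Matrix.toLin' (Q - (c : ℂ) • 1))) =
      (Finset.univ.filter fun i => hQ.eigenvalues i = c).card := by
  have hdiag : Q - (c : ℂ) • 1 = Unitary.conjStarAlgAut ℂ _ hQ.eigenvectorUnitary
      (diagonal fun i => (hQ.eigenvalues i : ℂ) - c) := by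
    have : (diagonal fun i => (hQ.eigenvalues i : ℂ) - c) =
        diagonal (RCLike.ofReal ∘ hQ.eigenvalues) - (c : ℂ) • 1 := by
      rw [smul_one_eq_diagonal, diagonal_sub]
      rfl
    rw [this, map_sub, map_smul, map_one, ← hQ.spectral_theorem]
  have hrank : (Q - (c : ℂ) • 1).rank =
      (Finset.univ.filter fun i => ¬ hQ.eigenvalues i = c).card := by
    rw [hdiag, Unitary.conjStarAlgAut_apply, ← Unitary.coe_star]
    simp [-isUnit_iff_ne_zero, -Unitary.coe_star, rank_diagonal, Fintype.card_subtype,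
      sub_eq_zero]
  have hnull := LinearMap.finrank_range_add_finrank_ker (Matrix.toLin' (Q - (c : ℂ) • 1))
  rw [Matrix.toLin'_apply', ← Matrix.rank, hrank, Module.finrank_fin_fun] at hnull
  have hsplit := Finset.card_filter_add_card_filter_not (s := Finset.univ)
    (fun i => hQ.eigenvalues i = c)
  rw [Finset.card_univ, Fintype.card_fin] at hsplit
  rw [Matrix.toLin'_apply']
  omega

/-- **Simplification of the invariant in class DIII** (eq. (20) of the paper).
If `Q` is Hermitian with particle-hole symmetry `K† conj(Q) K = 1 - Q` (`K` unitary),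
then `∑ᵢ (qᵢ - f(qᵢ)) = m/2`, where the `qᵢ` are the eigenvalues of `Q`, `f` is the
spectral-flattening function, and `m` is the multiplicity of the eigenvalue `1/2`. -/
theorem trace_vertex_eq_half_multiplicity (N : ℕ) (Q K : Matrix (Fin N) (Fin N) ℂ)
    (hQ : Q.IsHermitian) (hK : K ∈ Matrix.unitaryGroup (Fin N) ℂ)
    (hphs : Kᴴ * Q.map (starRingEnd ℂ) * K = 1 - Q) :
    ∑ i, (hQ.eigenvalues i -
        if hQ.eigenvalues i ≤ 1 / 2 then (0 : ℝ) else 1) =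
      (Module.finrank ℂ
        (LinearMap.ker (Matrix.toLin' (Q - ((1 / 2 : ℂ)) • 1))) : ℝ) / 2 := by
  set g : ℝ → ℝ := fun q => q - if q ≤ 1 / 2 then (0 : ℝ) else 1 with hg
  have hsum : ∑ i, g (1 - hQ.eigenvalues i) = ∑ i, g (hQ.eigenvalues i) := by
    have h := congrArg (fun s => (Multiset.map g s).sum) (eigenvalues_reflect hQ hK hphs)
    simp only [Multiset.map_map] at h
    exact h
  have hpair : ∀ q : ℝ, g q + g (1 - q) = if q = 1 / 2 then 1 else 0 := by
    intro q
    simp only [hg]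
    split_ifs <;> first | linarith | (exfalso; grind)
  have htwo : ∑ i, g (hQ.eigenvalues i) + ∑ i, g (1 - hQ.eigenvalues i) =
      ((Finset.univ.filter fun i => hQ.eigenvalues i = 1 / 2).card : ℝ) := by
    rw [← Finset.sum_add_distrib, Finset.sum_congr rfl fun i _ => hpair _, Finset.sum_boole]
  have hm := finrank_ker_sub_smul hQ (1 / 2)
  rw [show ((1 / 2 : ℝ) : ℂ) = 1 / 2 by norm_num] at hm
  rw [hm]
  change ∑ i, g (hQ.eigenvalues i) = _
  linarith
end

section
/- For every constant c > 0 there exists a constant C > 0 such that for all x, y ∈ ℤ², ∑_{z ∈ ℤ²} [e^{−c‖x − z‖}/(1 + ‖x‖ + ‖z‖)³] · [e^{−c‖z − y‖}/(1 + ‖z‖ + ‖y‖)³] ≤ C · e^{−(c/2)‖x − y‖}/((1 + ‖x‖)³ · (1 + ‖y‖)³), the sum over z converging. -/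
/-!
By the triangle inequality `‖x - y‖ ≤ ‖x - z‖ + ‖z - y‖`, the two exponentials multiply to at most
`e^{-(c/2)‖x - y‖} e^{-(c/2)‖x - z‖}`, while dropping `‖z‖` from both denominators leaves
`(1 + ‖x‖)³ (1 + ‖y‖)³`. What remains is to sum `e^{-(c/2)‖x - z‖}` over `z`: by translation
invariance this equals `∑_w e^{-(c/2)‖w‖}`, which is finite (`summable_exp_znorm`) by comparison
with a product of two geometric series, and serves as the constant `C`.
-/

/-- The Euclidean norm of a lattice point of `ℤ²`. -/
noncomputable def znorm (x : ℤ × ℤ) : ℝ := Real.sqrt ((x.1 : ℝ) ^ 2 + (x.2 : ℝ) ^ 2)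

lemma znorm_nonneg (x : ℤ × ℤ) : 0 ≤ znorm x := Real.sqrt_nonneg _

lemma znorm_eq_norm (x : ℤ × ℤ) : znorm x = ‖((x.1 : ℝ) + (x.2 : ℝ) * Complex.I : ℂ)‖ := by
  rw [Complex.norm_add_mul_I, znorm]

lemma znorm_triangle (x y z : ℤ × ℤ) : znorm (x - y) ≤ znorm (x - z) + znorm (z - y) := by
  simp only [znorm_eq_norm]
  refine le_trans (le_of_eq ?_) (norm_add_le _ _)
  congr 1
  push_cast [Prod.fst_sub, Prod.snd_sub]
  ring

lemma abs_add_abs_le_two_mul_znorm (x : ℤ × ℤ) : |(x.1 : ℝ)| + |(x.2 : ℝ)| ≤ 2 * znorm x := by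
  have h1 : |(x.1 : ℝ)| ≤ znorm x := Real.abs_le_sqrt (by nlinarith [sq_nonneg (x.2 : ℝ)])
  have h2 : |(x.2 : ℝ)| ≤ znorm x := Real.abs_le_sqrt (by nlinarith [sq_nonneg (x.1 : ℝ)])
  linarith

lemma summable_exp_abs_int {a : ℝ} (ha : 0 < a) :
    Summable fun n : ℤ => Real.exp (-a * |(n : ℝ)|) := by
  have h : Summable fun n : ℕ => Real.exp (-a * n) :=
    (Real.summable_exp_nat_mul_iff.mpr (neg_lt_zero.mpr ha)).congr fun n => by rw [mul_comm]
  apply Summable.of_nat_of_neg <;> simpa using h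

lemma summable_exp_znorm {a : ℝ} (ha : 0 < a) :
    Summable fun w : ℤ × ℤ => Real.exp (-a * znorm w) := by
  have h := summable_exp_abs_int (half_pos ha)
  have h0 : ∀ n : ℤ, 0 ≤ Real.exp (-(a / 2) * |(n : ℝ)|) := fun _ => (Real.exp_pos _).le
  refine (h.mul_of_nonneg h h0 h0).of_nonneg_of_le (fun _ => (Real.exp_pos _).le) fun w => ?_
  rw [← Real.exp_add]
  apply Real.exp_le_exp.mpr
  nlinarith [abs_add_abs_le_two_mul_znorm w]

/-- The termwise bound: half of the exponential decay goes into `‖x - y‖`, and the half in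
`‖x - z‖` is kept to make the sum over `z` converge. -/
lemma convolution_term_le {c : ℝ} (hc : 0 < c) (x y z : ℤ × ℤ) :
    Real.exp (-c * znorm (x - z)) / (1 + znorm x + znorm z) ^ 3 *
        (Real.exp (-c * znorm (z - y)) / (1 + znorm z + znorm y) ^ 3) ≤
      Real.exp (-(c / 2) * znorm (x - y)) / ((1 + znorm x) ^ 3 * (1 + znorm y) ^ 3) *
        Real.exp (-(c / 2) * znorm (x - z)) := by
  have hx := znorm_nonneg x
  have hy := znorm_nonneg y
  have hz := znorm_nonneg z
  rw [div_mul_div_comm, div_mul_eq_mul_div, ← Real.exp_add, ← Real.exp_add]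
  gcongr ?_ / (?_ ^ 3 * ?_ ^ 3)
  · apply Real.exp_le_exp.mpr
    nlinarith [znorm_triangle x y z, znorm_nonneg (z - y)]
  · linarith
  · linarith

/-- **Weighted convolution bound** (eq. (55), Appendix C of the paper).
For every `c > 0` there is `C > 0` such that for all `x, y ∈ ℤ²`,
`∑_z [e^{-c‖x-z‖}/(1+‖x‖+‖z‖)³]·[e^{-c‖z-y‖}/(1+‖z‖+‖y‖)³]
  ≤ C e^{-(c/2)‖x-y‖}/((1+‖x‖)³(1+‖y‖)³)`, the sum converging. -/
theorem weighted_convolution_bound (c : ℝ) (hc : 0 < c) :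
    ∃ C : ℝ, 0 < C ∧ ∀ x y : ℤ × ℤ,
      Summable (fun z : ℤ × ℤ =>
        Real.exp (-c * znorm (x - z)) / (1 + znorm x + znorm z) ^ 3 *
          (Real.exp (-c * znorm (z - y)) / (1 + znorm z + znorm y) ^ 3)) ∧
      ∑' z : ℤ × ℤ,
          Real.exp (-c * znorm (x - z)) / (1 + znorm x + znorm z) ^ 3 *
            (Real.exp (-c * znorm (z - y)) / (1 + znorm z + znorm y) ^ 3) ≤
        C * Real.exp (-(c / 2) * znorm (x - y)) /
          ((1 + znorm x) ^ 3 * (1 + znorm y) ^ 3) := by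
  have hg := summable_exp_znorm (half_pos hc)
  refine ⟨∑' w, Real.exp (-(c / 2) * znorm w),
    hg.tsum_pos (fun _ => (Real.exp_pos _).le) 0 (Real.exp_pos _), fun x y => ?_⟩
  have hgx : Summable fun z => Real.exp (-(c / 2) * znorm (x - z)) :=
    (Equiv.subLeft x).summable_iff.mpr hg
  have hB := hgx.mul_left
    (Real.exp (-(c / 2) * znorm (x - y)) / ((1 + znorm x) ^ 3 * (1 + znorm y) ^ 3))
  have hS := hB.of_nonneg_of_le (fun z => by
    have hx := znorm_nonneg x
    have hy := znorm_nonneg y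
    have hz := znorm_nonneg z
    positivity) (convolution_term_le hc x y)
  refine ⟨hS, (hS.tsum_le_tsum (convolution_term_le hc x y) hB).trans_eq ?_⟩
  have hT : ∑' z, Real.exp (-(c / 2) * znorm (x - z)) = ∑' w, Real.exp (-(c / 2) * znorm w) :=
    (Equiv.subLeft x).tsum_eq fun w => Real.exp (-(c / 2) * znorm w)
  rw [tsum_mul_left, hT]
  ring
end
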